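/- arXiv:2310.09451 — 4 statements merged into one kernel-verified Lean document; each statement's English description precedes it below -/
import Mathlib

section
/- Let $G$ be a surjunctive group and let $K$ be a field. Then the group ring $K[G]$ is stably finite, i.e., for every integer $d \geq 1$ and all $d \times d$ matrices $A, B$ with entries in $K[G]$, if $AB = 1$ then $BA = 1$. -/
/-!
Suppose first that the coefficient ring `F` is finite. Then `F[G]` acts on `F^G` by
`(a • x) h = ∑ s, a s * x (h * s)`, faithfully and commuting with left translations, so a `d × d`
matrix `M` over `F[G]` gives a cellular automaton `τ_M` on `(F^d)^G`, with `τ_{MN} = τ_M ∘ τ_N`.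
If `A * B = 1`, then `τ_B` is injective, hence surjective by surjunctivity. So `τ_A` is a two-sided
inverse of `τ_B`, and `B * A = 1` by faithfulness.

For a field `K`, let `A * B = 1` over `K[G]` and suppose that some entry of `B * A - 1` has a
nonzero coefficient `c`. All coefficients of `A` and `B` lie in a finitely generated subring `S`
of `K`. Since `ℤ` is a Jacobson ring, so is the domain `S`, and therefore `c` survives in `S ⧸ m`
for some maximal ideal `m`; moreover `S ⧸ m` is a finite field. Reducing `A` and `B` modulo `m`
contradicts the finite case.
-/

/-- A ring `R` is stably finite if for every `d ≥ 1` and all `d × d` matrices `A B` over `R`,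
`A * B = 1` implies `B * A = 1`. -/
def IsStablyFinite (R : Type*) [Ring R] : Prop :=
  ∀ d : ℕ, 1 ≤ d → ∀ A B : Matrix (Fin d) (Fin d) R, A * B = 1 → B * A = 1

/-- A group `G` is surjunctive if for every finite set `A`, every injective `G`-equivariant
map `τ : A^G → A^G` which is continuous for the prodiscrete topology is surjective. -/
def Surjunctive (G : Type*) [Group G] : Prop :=
  ∀ (A : Type) [Finite A] (τ : (G → A) → (G → A)),
    Function.Injective τ →
    (∀ (g : G) (x : G → A), τ (fun h => x (g * h)) = fun h => τ x (g * h)) →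
    @Continuous (G → A) (G → A)
      (@Pi.topologicalSpace G (fun _ => A) fun _ => ⊥)
      (@Pi.topologicalSpace G (fun _ => A) fun _ => ⊥) τ →
    Function.Surjective τ

/-! ### Finite coefficient rings -/

/-- Surjunctivity for finite alphabets in an arbitrary universe, with any discrete topology. -/
lemma Surjunctive.surjective_of_discrete {G : Type*} [Group G] (hG : Surjunctive G)
    {A : Type*} [Finite A] [TopologicalSpace A] [DiscreteTopology A]
    (τ : (G → A) → (G → A)) (hinj : Function.Injective τ)
    (heq : ∀ (g : G) (x : G → A), τ (fun h => x (g * h)) = fun h => τ x (g * h))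
    (hc : Continuous τ) : Function.Surjective τ := by
  obtain ⟨n, ⟨e⟩⟩ := Finite.exists_equiv_fin A
  have key := hG (Fin n) (fun x h => e (τ (fun k => e.symm (x k)) h)) ?_ ?_ ?_
  · intro y
    obtain ⟨x, hx⟩ := key (fun k => e (y k))
    exact ⟨fun k => e.symm (x k), funext fun h => e.injective (congrFun hx h)⟩
  · intro x y hxy
    have h1 := hinj (funext fun h => e.injective (congrFun hxy h))
    exact funext fun h => e.symm.injective (congrFun h1 h)
  · intro g x
    funext h
    exact congrArg e (congrFun (heq g fun k => e.symm (x k)) h)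
  · have h0 : (instTopologicalSpaceFin : TopologicalSpace (Fin n)) = ⊥ := rfl
    rw [← h0]
    refine continuous_pi fun h => continuous_of_discreteTopology.comp ?_
    refine (continuous_apply h).comp (hc.comp ?_)
    exact continuous_pi fun k => continuous_of_discreteTopology.comp (continuous_apply k)

/-- The representation of `G` on `G → F` by right translations, `(g • x) h = x (h * g)`. -/
def rightTranslation (F G : Type*) [CommRing F] [Group G] : G →* Module.End F (G → F) where
  toFun g :=
    { toFun := fun x h => x (h * g)
      map_add' := fun _ _ => rfl
      map_smul' := fun _ _ => rfl }
  map_one' := by ext; simp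
  map_mul' a b := by
    refine LinearMap.ext fun x => funext fun h => ?_
    simp [mul_assoc]

/-- The action of the group ring on configurations, `(a • x) h = ∑ s, a s * x (h * s)`. -/
noncomputable def convAction (F G : Type*) [CommRing F] [Group G] :
    MonoidAlgebra F G →ₐ[F] Module.End F (G → F) :=
  MonoidAlgebra.lift F (Module.End F (G → F)) G (rightTranslation F G)

lemma convAction_apply {F G : Type*} [CommRing F] [Group G] (a : MonoidAlgebra F G)
    (x : G → F) (h : G) :
    convAction F G a x h = ∑ s ∈ a.coeff.support, a.coeff s * x (h * s) := by
  simp [convAction, MonoidAlgebra.lift_apply, Finsupp.sum, rightTranslation]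

lemma convAction_injective (F G : Type*) [CommRing F] [Group G] :
    Function.Injective (convAction F G) := by
  classical
  rw [injective_iff_map_eq_zero]
  intro a ha
  ext t
  -- The coefficient of `a` at `t` is the value at `1` of `a` applied to the indicator of `t`.
  have h := convAction_apply a (Pi.single t 1) 1
  rw [ha] at h
  simpa [Pi.single_apply, eq_comm] using h

/-- The cellular automaton on the alphabet `F^d` defined by a matrix over the group ring. -/
noncomputable def matrixAutomaton {F G : Type*} [CommRing F] [Group G] {d : ℕ}
    (M : Matrix (Fin d) (Fin d) (MonoidAlgebra F G)) (x : G → Fin d → F) : G → Fin d → F :=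
  fun h i => ∑ j, convAction F G (M i j) (fun g => x g j) h

lemma matrixAutomaton_mul {F G : Type*} [CommRing F] [Group G] {d : ℕ}
    (M N : Matrix (Fin d) (Fin d) (MonoidAlgebra F G)) (x : G → Fin d → F) :
    matrixAutomaton (M * N) x = matrixAutomaton M (matrixAutomaton N x) := by
  funext h i
  have hrw : ∀ j, (fun g => matrixAutomaton N x g j) =
      ∑ k, convAction F G (N j k) (fun g => x g k) := by
    intro j
    funext g
    simp [matrixAutomaton]
  have hl : ∀ M : Matrix (Fin d) (Fin d) (MonoidAlgebra F G), ∀ y,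
      matrixAutomaton M y h i = ∑ j, convAction F G (M i j) (fun g => y g j) h := fun _ _ => rfl
  rw [hl, hl]
  simp only [hrw, Matrix.mul_apply, map_sum, map_mul, LinearMap.sum_apply, Finset.sum_apply,
    Module.End.mul_apply]
  exact Finset.sum_comm

lemma matrixAutomaton_one {F G : Type*} [CommRing F] [Group G] {d : ℕ} (x : G → Fin d → F) :
    matrixAutomaton (1 : Matrix (Fin d) (Fin d) (MonoidAlgebra F G)) x = x := by
  funext h i
  rw [matrixAutomaton, Finset.sum_eq_single i]
  · simp
  · intro j _ hj
    simp [Matrix.one_apply_ne hj.symm]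
  · simp

lemma matrixAutomaton_injective {F G : Type*} [CommRing F] [Group G] {d : ℕ} :
    Function.Injective (matrixAutomaton :
      Matrix (Fin d) (Fin d) (MonoidAlgebra F G) → (G → Fin d → F) → (G → Fin d → F)) := by
  classical
  intro M N hMN
  ext1 i j
  refine convAction_injective F G (LinearMap.ext fun x => funext fun h => ?_)
  -- Evaluation on configurations concentrated in the `j`-th coordinate isolates the entry `i j`.
  have hs : ∀ M : Matrix (Fin d) (Fin d) (MonoidAlgebra F G),
      matrixAutomaton M (fun g => Pi.single j (x g)) h i = convAction F G (M i j) x h := by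
    intro M
    rw [matrixAutomaton, Finset.sum_eq_single j]
    · simp
    · intro k _ hk
      have : (fun g => (Pi.single j (x g) : Fin d → F) k) = 0 := by
        funext g
        simp [hk]
      rw [this, map_zero]
      rfl
    · simp
  rw [← hs M, ← hs N, hMN]

lemma isStablyFinite_of_finite {G : Type*} [Group G] (hG : Surjunctive G)
    (F : Type*) [CommRing F] [Finite F] : IsStablyFinite (MonoidAlgebra F G) := by
  intro d _ A B hAB
  let : TopologicalSpace F := ⊥
  have : DiscreteTopology F := ⟨rfl⟩
  have hleft : ∀ x : G → Fin d → F, matrixAutomaton A (matrixAutomaton B x) = x := fun x => by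
    rw [← matrixAutomaton_mul, hAB, matrixAutomaton_one]
  have hsurj : Function.Surjective (matrixAutomaton B) := by
    refine hG.surjective_of_discrete _ (Function.LeftInverse.injective hleft) ?_ ?_
    · intro g x
      funext h i
      simp only [matrixAutomaton, convAction_apply, mul_assoc]
    · refine continuous_pi fun h => continuous_pi fun i => ?_
      simp only [matrixAutomaton, convAction_apply]
      fun_prop
  apply matrixAutomaton_injective
  funext y
  obtain ⟨x, rfl⟩ := hsurj y
  rw [matrixAutomaton_mul, hleft, matrixAutomaton_one]

/-! ### Reduction to finite fields -/

lemma isJacobsonRing_int : IsJacobsonRing ℤ := by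
  rw [isJacobsonRing_iff_prime_eq]
  intro P hP
  by_cases h : P = ⊥
  · subst h
    rw [eq_bot_iff]
    intro x hx
    have h1 := (Ideal.mem_jacobson_bot.1 hx) x
    rw [Int.isUnit_iff] at h1
    rw [Ideal.mem_bot]
    rcases h1 with h1 | h1 <;> nlinarith
  · have := hP.isMaximal h
    exact Ideal.jacobson_eq_self_of_isMaximal

/-- A field that is finitely generated as a ring is finite. -/
lemma finite_of_finiteType_int (F : Type*) [Field F] [Algebra.FiniteType ℤ F] : Finite F := by
  have := isJacobsonRing_int
  have : Module.Finite ℤ F := finite_of_finite_type_of_isJacobsonRing ℤ F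
  obtain ⟨p, hp⟩ := CharP.exists F
  have hp0 : p ≠ 0 := by
    rintro rfl
    have : CharZero F := CharP.charP_to_charZero F
    -- In characteristic zero, `F` would be integral over a copy of `ℤ`, making `ℤ` a field.
    exact Int.not_isField (isField_of_isIntegral_of_isField
      (RingHom.injective_int (algebraMap ℤ F)) (Field.toIsField F))
  refine Module.finite_of_fg_torsion F fun x => ?_
  refine ⟨⟨(p : ℤ), mem_nonZeroDivisors_of_ne_zero (by exact_mod_cast hp0)⟩, ?_⟩
  simp [Submonoid.smul_def]

/-- Residue fields of finitely generated rings are finite. The `ℤ`-algebra structure on `S` is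
arbitrary, so that the one carried by a subalgebra of a field is covered. -/
lemma finite_of_surjective {S F : Type*} [CommRing S] [Algebra ℤ S] [Algebra.FiniteType ℤ S]
    [Field F] (f : S →+* F) (hf : Function.Surjective f) : Finite F :=
  have : Algebra.FiniteType ℤ F := .of_surjective
    (AlgHom.mk f fun n => by simp : S →ₐ[ℤ] F) hf
  finite_of_finiteType_int F

lemma exists_map_eq_of_coeff_mem {K G : Type*} [Field K] [Group G] (S : Subalgebra ℤ K) {d : ℕ}
    (A : Matrix (Fin d) (Fin d) (MonoidAlgebra K G)) (hA : ∀ i j g, (A i j).coeff g ∈ S) :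
    ∃ A' : Matrix (Fin d) (Fin d) (MonoidAlgebra S G),
      A'.map (MonoidAlgebra.mapRingHom G (algebraMap S K)) = A := by
  have h : ∀ i j, ∃ a : MonoidAlgebra S G,
      MonoidAlgebra.mapRingHom G (algebraMap S K) a = A i j := by
    intro i j
    refine ⟨∑ g ∈ (A i j).coeff.support, MonoidAlgebra.single g ⟨(A i j).coeff g, hA i j g⟩, ?_⟩
    rw [map_sum]
    conv_rhs => rw [← MonoidAlgebra.sum_coeff_single (A i j), Finsupp.sum]
    simp
  choose A' hA' using h
  exact ⟨Matrix.of A', by ext1 i j; exact hA' i j⟩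

theorem surjunctive_group_ring_stably_finite {G : Type*} [Group G] (hG : Surjunctive G)
    (K : Type*) [Field K] : IsStablyFinite (MonoidAlgebra K G) := by
  classical
  intro d hd A B hAB
  let coeffs (M : Matrix (Fin d) (Fin d) (MonoidAlgebra K G)) : Set K :=
    ⋃ i, ⋃ j, Set.range (M i j).coeff
  have hfin : ∀ M, (coeffs M).Finite := fun M =>
    Set.finite_iUnion fun i => Set.finite_iUnion fun j => Finsupp.finite_range _
  let S : Subalgebra ℤ K := Algebra.adjoin ℤ (coeffs A ∪ coeffs B)
  have : Algebra.FiniteType ℤ S := .adjoin_of_finite ((hfin A).union (hfin B))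
  have hmem : ∀ M i j g, (M i j).coeff g ∈ coeffs M := fun M i j g =>
    Set.mem_iUnion_of_mem i (Set.mem_iUnion_of_mem j ⟨g, rfl⟩)
  obtain ⟨A', hA'⟩ := exists_map_eq_of_coeff_mem S A
    fun i j g => Algebra.subset_adjoin (Or.inl (hmem A i j g))
  obtain ⟨B', hB'⟩ := exists_map_eq_of_coeff_mem S B
    fun i j g => Algebra.subset_adjoin (Or.inr (hmem B i j g))
  have hinj : Function.Injective (MonoidAlgebra.mapRingHom G (algebraMap S K)) :=
    MonoidAlgebra.map_injective (f := (algebraMap S K : S →+ K)) Subtype.val_injective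
  have hAB' : A' * B' = 1 := by
    apply Matrix.map_injective hinj
    beta_reduce
    rw [Matrix.map_mul, hA', hB', hAB, Matrix.map_one _ (map_zero _) (map_one _)]
  suffices h : B' * A' = 1 by
    rw [← hA', ← hB', ← Matrix.map_mul, h, Matrix.map_one _ (map_zero _) (map_one _)]
  by_contra hne
  obtain ⟨i, j, g, hc⟩ : ∃ i j g, ((B' * A' - 1) i j).coeff g ≠ 0 := by
    by_contra! hall
    refine hne (sub_eq_zero.1 ?_)
    ext i j g
    simpa using congrArg (Subtype.val) (hall i j g)
  have := isJacobsonRing_int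
  have : IsJacobsonRing S := isJacobsonRing_of_finiteType (A := ℤ)
  have hjac : (⊥ : Ideal S).jacobson = ⊥ :=
    IsJacobsonRing.out ‹_› (Ideal.isPrime_bot (α := S)).isRadical
  obtain ⟨m, hm, hcm⟩ : ∃ m : Ideal S, m.IsMaximal ∧ ((B' * A' - 1) i j).coeff g ∉ m := by
    by_contra! hall
    refine hc (Ideal.mem_bot.1 (hjac ▸ ?_))
    exact Ideal.mem_sInf.2 fun _ hI => hall _ hI.2
  let := Ideal.Quotient.field m
  have : Finite (S ⧸ m) := finite_of_surjective (Ideal.Quotient.mk m) Ideal.Quotient.mk_surjective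
  let π := MonoidAlgebra.mapRingHom G (Ideal.Quotient.mk m)
  have hred : B'.map π * A'.map π = 1 := by
    apply isStablyFinite_of_finite hG (S ⧸ m) d hd
    rw [← Matrix.map_mul, hAB', Matrix.map_one _ (map_zero _) (map_one _)]
  have hzero : (B' * A' - 1).map π = 0 := by
    rw [Matrix.map_sub _ (map_sub π), Matrix.map_mul, hred,
      Matrix.map_one _ (map_zero _) (map_one _), sub_self]
  have h0 := congrArg (fun M => (M i j).coeff g) hzero
  refine hcm (Ideal.Quotient.eq_zero_iff_mem.1 ?_)
  simpa [π] using h0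
end

section
/- Let $G$ be a group and let $K$ be a field. Then the group ring $K[G]$ is stably finite if and only if, for every finite-dimensional vector space $V$ over $K$, every injective $K$-linear map $\tau \colon V^G \to V^G$ that is $G$-equivariant (i.e., $\tau(x \circ L_g) = \tau(x) \circ L_g$ for all $g \in G$ and $x \in V^G$, where $L_g$ is left multiplication by $g$) and continuous with respect to the product topology on $V^G$ (with $V$ discrete) is surjective. -/
open Function Module

theorem isStablyFinite_iff_isStablyFiniteRing {R : Type*} [Ring R] :
    IsStablyFinite R ↔ IsStablyFiniteRing R := by
  simp only [IsStablyFinite, isStablyFiniteRing_iff, isDedekindFiniteMonoid_iff]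
  constructor
  · intro h n A B hAB
    rcases Nat.eq_zero_or_pos n with rfl | hn
    · exact Subsingleton.elim _ _
    · exact h n hn A B hAB
  · exact fun h d _ A B hAB => h d hAB

namespace LinearCellularAutomata

variable {G : Type*} [Group G] {K : Type*} [Field K] {V : Type*} [AddCommGroup V] [Module K V]
  {n : ℕ}

/-- The standard `K`-basis of `K[G] ^ n`: the vector at `⟨i, g⟩` has the group element `g` in
position `i` and zero elsewhere. -/
noncomputable def stdBasis (G : Type*) [Group G] (K : Type*) [Field K] (n : ℕ) :
    Basis (Σ _ : Fin n, G) K (Fin n → MonoidAlgebra K G) :=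
  Pi.basis fun _ => MonoidAlgebra.basis G K

theorem stdBasis_apply (i : Fin n) (g : G) :
    stdBasis G K n ⟨i, g⟩ = Pi.single i (MonoidAlgebra.single g 1) := by
  simp [stdBasis, Pi.basis_apply]

theorem single_smul_stdBasis (i : Fin n) (g h : G) :
    (MonoidAlgebra.single g (1 : K)) • stdBasis G K n ⟨i, h⟩ = stdBasis G K n ⟨i, g * h⟩ := by
  simp [stdBasis_apply, ← Pi.single_smul]

theorem stdBasis_eq_single_smul (i : Fin n) (g : G) :
    stdBasis G K n ⟨i, g⟩ = (MonoidAlgebra.single g (1 : K)) • Pi.basisFun _ (Fin n) i := by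
  simp [stdBasis_apply, ← Pi.single_smul]

/-- The identification of `V ^ G` with the `K`-dual of `K[G] ^ n` given by a basis `b` of `V`:
the functional attached to `x` sends the standard basis vector at `⟨i, g⟩` to the `i`-th coordinate
of `x g`. -/
noncomputable def pairing (G : Type*) [Group G] (b : Basis (Fin n) K V) :
    (G → V) ≃ₗ[K] Dual K (Fin n → MonoidAlgebra K G) where
  toFun x := (stdBasis G K n).constr K fun p => b.repr (x p.2) p.1
  map_add' x y := (stdBasis G K n).ext fun p => by simp
  map_smul' c x := (stdBasis G K n).ext fun p => by simp
  invFun φ g := ∑ i, φ (stdBasis G K n ⟨i, g⟩) • b i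
  left_inv x := by
    funext g
    simp [b.sum_repr]
  right_inv φ := (stdBasis G K n).ext fun p => by
    simp [Finsupp.single_apply]

@[simp]
theorem pairing_stdBasis (b : Basis (Fin n) K V) (x : G → V) (i : Fin n) (g : G) :
    pairing G b x (stdBasis G K n ⟨i, g⟩) = b.repr (x g) i := by
  simp [pairing]

theorem pairing_shift (b : Basis (Fin n) K V) (x : G → V) (g : G)
    (m : Fin n → MonoidAlgebra K G) :
    pairing G b (fun h => x (g * h)) m = pairing G b x (MonoidAlgebra.single g (1 : K) • m) := by
  have : pairing G b (fun h => x (g * h)) =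
      pairing G b x ∘ₗ DistribSMul.toLinearMap K _ (MonoidAlgebra.single g (1 : K)) :=
    (stdBasis G K n).ext fun ⟨i, h⟩ => by simp [single_smul_stdBasis]
  exact LinearMap.congr_fun this m

/-- Pairing with a fixed element only sees finitely many values of the configuration. -/
theorem exists_finset_pairing_congr (b : Basis (Fin n) K V) (m : Fin n → MonoidAlgebra K G) :
    ∃ F : Finset G, ∀ x y : G → V, (∀ h ∈ F, x h = y h) →
      pairing G b x m = pairing G b y m := by
  classical
  refine ⟨((stdBasis G K n).repr m).support.image Sigma.snd, fun x y hxy => ?_⟩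
  simp only [pairing, LinearEquiv.coe_mk, LinearMap.coe_mk, AddHom.coe_mk, Basis.constr_apply]
  refine Finset.sum_congr rfl fun p hp => ?_
  simp only [hxy p.2 (Finset.mem_image_of_mem _ hp)]

/-- A functional on `V ^ G` that only depends on the values on a finite set is the pairing with an
element of the predual `K[G] ^ n`. -/
theorem exists_eq_pairing (b : Basis (Fin n) K V) (ℓ : (G → V) →ₗ[K] K) (F : Finset G)
    (hF : ∀ x : G → V, (∀ h ∈ F, x h = 0) → ℓ x = 0) :
    ∃ m, ∀ x, ℓ x = pairing G b x m := by
  classical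
  refine ⟨∑ h ∈ F, ∑ j, ℓ (Pi.single h (b j)) • stdBasis G K n ⟨j, h⟩, fun x => ?_⟩
  have hx : ℓ x = ℓ (∑ h ∈ F, Pi.single h (x h)) := by
    rw [← sub_eq_zero, ← map_sub]
    refine hF _ fun h hh => ?_
    simp [Finset.sum_apply, Pi.single_apply, hh]
  rw [hx]
  simp only [map_sum, map_smul, pairing_stdBasis, smul_eq_mul]
  refine Finset.sum_congr rfl fun h _ => ?_
  conv_lhs => rw [← b.sum_repr (x h)]
  have : Pi.single h (∑ j, b.repr (x h) j • b j) =
      ∑ j, b.repr (x h) j • (Pi.single h (b j) : G → V) := by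
    rw [← LinearMap.single_apply (R := K), map_sum]
    simp
  rw [this, map_sum]
  simp [mul_comm]

/-- Continuity at `0`, read at the identity of `G`: the value `τ x 1` vanishes as soon as `x`
vanishes on a suitable finite set. -/
theorem exists_finset_of_continuous {τ : (G → V) → (G → V)} (h0 : τ 0 = 0)
    (hc : @Continuous (G → V) (G → V)
      (@Pi.topologicalSpace G (fun _ => V) fun _ => ⊥)
      (@Pi.topologicalSpace G (fun _ => V) fun _ => ⊥) τ) :
    ∃ F : Finset G, ∀ x : G → V, (∀ h ∈ F, x h = 0) → τ x 1 = 0 := by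
  let _ : TopologicalSpace V := ⊥
  have : DiscreteTopology V := ⟨rfl⟩
  have hc' : Continuous fun x => τ x 1 := (continuous_apply (1 : G)).comp hc
  have ho : IsOpen {x : G → V | τ x 1 = 0} := (isOpen_discrete {(0 : V)}).preimage hc'
  obtain ⟨F, u, hu, hsub⟩ := isOpen_pi_iff.1 ho 0 (by simp [h0])
  refine ⟨F, fun x hx => hsub fun h hh => ?_⟩
  rw [hx h hh]
  exact (hu h hh).2

theorem exists_transpose (b : Basis (Fin n) K V) {τ : (G → V) → (G → V)}
    (hl : IsLinearMap K τ)
    (he : ∀ (g : G) (x : G → V), τ (fun h => x (g * h)) = fun h => τ x (g * h))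
    (hc : @Continuous (G → V) (G → V)
      (@Pi.topologicalSpace G (fun _ => V) fun _ => ⊥)
      (@Pi.topologicalSpace G (fun _ => V) fun _ => ⊥) τ) :
    ∃ f : Module.End (MonoidAlgebra K G) (Fin n → MonoidAlgebra K G),
      ∀ x, pairing G b (τ x) = (f.restrictScalars K).dualMap (pairing G b x) := by
  obtain ⟨F, hF⟩ := exists_finset_of_continuous hl.map_zero hc
  have key : ∀ i, ∃ m, ∀ x, b.repr (τ x 1) i = pairing G b x m := fun i =>
    exists_eq_pairing b (b.coord i ∘ₗ LinearMap.proj (R := K) (φ := fun _ : G => V) 1 ∘ₗ hl.mk' τ) F fun x hx => by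
      simp [hF x hx]
  choose m hm using key
  refine ⟨(Pi.basisFun (MonoidAlgebra K G) (Fin n)).constr ℕ m, fun x => ?_⟩
  refine (stdBasis G K n).ext fun ⟨i, g⟩ => ?_
  -- Equivariance moves the evaluation point from `g` to `1`.
  have hg : τ x g = τ (fun h => x (g * h)) 1 := by simp [he]
  rw [pairing_stdBasis, hg, hm, pairing_shift, LinearMap.dualMap_apply,
    LinearMap.restrictScalars_apply, stdBasis_eq_single_smul,
    LinearMap.map_smul _ (MonoidAlgebra.single g (1 : K)), Basis.constr_basis]

/-- The cellular automaton on `V ^ G` dual to an endomorphism of `K[G] ^ n`. -/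
noncomputable def transpose (b : Basis (Fin n) K V)
    (f : Module.End (MonoidAlgebra K G) (Fin n → MonoidAlgebra K G)) : (G → V) →ₗ[K] (G → V) :=
  (pairing G b).symm.toLinearMap ∘ₗ (f.restrictScalars K).dualMap ∘ₗ (pairing G b).toLinearMap

theorem pairing_transpose (b : Basis (Fin n) K V)
    (f : Module.End (MonoidAlgebra K G) (Fin n → MonoidAlgebra K G)) (x : G → V) :
    pairing G b (transpose b f x) = (f.restrictScalars K).dualMap (pairing G b x) := by
  simp [transpose]

theorem repr_transpose (b : Basis (Fin n) K V)
    (f : Module.End (MonoidAlgebra K G) (Fin n → MonoidAlgebra K G)) (x : G → V) (g : G)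
    (i : Fin n) :
    b.repr (transpose b f x g) i = pairing G b x (f (stdBasis G K n ⟨i, g⟩)) := by
  rw [← pairing_stdBasis, pairing_transpose]
  rfl

theorem transpose_equivariant (b : Basis (Fin n) K V)
    (f : Module.End (MonoidAlgebra K G) (Fin n → MonoidAlgebra K G)) (g : G) (x : G → V) :
    transpose b f (fun h => x (g * h)) = fun h => transpose b f x (g * h) := by
  funext h
  refine b.ext_elem fun i => ?_
  rw [repr_transpose, repr_transpose, pairing_shift, ← map_smul, single_smul_stdBasis]

theorem transpose_continuous (b : Basis (Fin n) K V)
    (f : Module.End (MonoidAlgebra K G) (Fin n → MonoidAlgebra K G)) :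
    @Continuous (G → V) (G → V)
      (@Pi.topologicalSpace G (fun _ => V) fun _ => ⊥)
      (@Pi.topologicalSpace G (fun _ => V) fun _ => ⊥) (transpose b f) := by
  classical
  let _ : TopologicalSpace V := ⊥
  have : DiscreteTopology V := ⟨rfl⟩
  refine continuous_pi fun g => ?_
  choose F hF using fun i => exists_finset_pairing_congr b (f (stdBasis G K n ⟨i, g⟩))
  refine continuous_iff_continuousAt.2 fun x => ?_
  -- Near `x` the value at `g` is constant: it only depends on the values on the `F i`.
  have hev : ∀ᶠ y in nhds x, ∀ h ∈ Finset.univ.biUnion F, y h = x h :=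
    (Finset.eventually_all _).2 fun h _ =>
      ((isOpen_discrete {x h}).preimage (continuous_apply h)).mem_nhds (Set.mem_singleton (x h))
  refine (continuousAt_const (y := transpose b f x g)).congr ?_
  filter_upwards [hev] with y hy
  refine b.ext_elem fun i => ?_
  rw [repr_transpose, repr_transpose]
  exact hF i _ _ fun h hh => (hy h (Finset.mem_biUnion.2 ⟨i, Finset.mem_univ i, hh⟩)).symm

theorem injective_iff
    (b : Basis (Fin n) K V) {τ : (G → V) → (G → V)}
    {f : Module.End (MonoidAlgebra K G) (Fin n → MonoidAlgebra K G)}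
    (h : ∀ x, pairing G b (τ x) = (f.restrictScalars K).dualMap (pairing G b x)) :
    Injective τ ↔ Surjective f := by
  have hcomp : pairing G b ∘ τ = (f.restrictScalars K).dualMap ∘ pairing G b := funext h
  rw [← (pairing G b).injective.of_comp_iff τ, hcomp,
    Injective.of_comp_iff' _ (pairing G b).bijective, LinearMap.dualMap_injective_iff]
  rfl

theorem surjective_iff
    (b : Basis (Fin n) K V) {τ : (G → V) → (G → V)}
    {f : Module.End (MonoidAlgebra K G) (Fin n → MonoidAlgebra K G)}
    (h : ∀ x, pairing G b (τ x) = (f.restrictScalars K).dualMap (pairing G b x)) :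
    Surjective τ ↔ Injective f := by
  have hcomp : pairing G b ∘ τ = (f.restrictScalars K).dualMap ∘ pairing G b := funext h
  rw [← Surjective.of_comp_iff' (pairing G b).bijective τ, hcomp,
    (pairing G b).surjective.of_comp_iff, LinearMap.dualMap_surjective_iff]
  rfl

end LinearCellularAutomata

open LinearCellularAutomata in
theorem stably_finite_iff_injective_linear_cellular_automata_surjective
    {G : Type*} [Group G] (K : Type v) [Field K] :
    IsStablyFinite (MonoidAlgebra K G) ↔
      ∀ (V : Type v) [AddCommGroup V] [Module K V] [FiniteDimensional K V]
        (τ : (G → V) → (G → V)),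
        IsLinearMap K τ →
        (∀ (g : G) (x : G → V), τ (fun h => x (g * h)) = fun h => τ x (g * h)) →
        @Continuous (G → V) (G → V)
          (@Pi.topologicalSpace G (fun _ => V) fun _ => ⊥)
          (@Pi.topologicalSpace G (fun _ => V) fun _ => ⊥) τ →
        Function.Injective τ → Function.Surjective τ := by
  rw [isStablyFinite_iff_isStablyFiniteRing, isStablyFiniteRing_iff_injective_of_surjective]
  constructor
  · intro hsf V _ _ _ τ hl he hc hinj
    have b := Module.finBasis K V
    obtain ⟨f, hf⟩ := exists_transpose b hl he hc
    exact (surjective_iff b hf).2 (hsf _ f ((injective_iff b hf).1 hinj))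
  · intro hca n f hsurj
    have b := Pi.basisFun K (Fin n)
    have hf := pairing_transpose b f
    exact (surjective_iff b hf).1 (hca _ (transpose b f) (transpose b f).isLinear
      (transpose_equivariant b f) (transpose_continuous b f) ((injective_iff b hf).2 hsurj))
end

section
/- Let $G$ be a group and let $K$ and $L$ be fields that are elementarily equivalent as structures in the first-order language of rings. Then the group ring $K[G]$ is stably finite if and only if the group ring $L[G]$ is stably finite. -/
/-!
For a fixed size `d` and a fixed finite set `S ⊆ G`, the assertion that `A * B = 1` implies
`B * A = 1` for all `d × d` matrices `A`, `B` over `K[G]` whose entries are supported in `S` is a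
first-order sentence about `K`: the entries of `A` and `B` are given by finitely many coefficients
in `K`, and each of the two matrix equations says that finitely many integer polynomials in these
coefficients vanish. Stable finiteness of `K[G]` is the conjunction of all these sentences, since
any two matrices over `K[G]` have entries supported in a common finite set; hence it depends only
on the theory of `K`.

The polynomials are obtained from the *generic* pair of matrices supported in `S`, whose
coefficients are independent variables of a free commutative ring `P`: every pair over `K[G]`
supported in `S` is its image under the map `P[G] → K[G]` induced by some `P → K`, and the relevant
polynomials are the coefficients of `A * B - 1` and `B * A - 1` for the generic pair.
-/

open FirstOrder

namespace StablyFiniteTransfer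

open Language

/-- Implications between finite systems of integer polynomial equations transfer between
elementarily equivalent commutative rings. -/
theorem polynomial_implication_transfer {ι α β : Type*} [Finite ι] [Finite α] [Finite β]
    (K L : Type*) [CommRing K] [CommRing L] [Ring.CompatibleRing K] [Ring.CompatibleRing L]
    (h : K ≅[Language.ring] L) (p : α → FreeCommRing ι) (q : β → FreeCommRing ι)
    (hK : ∀ v : ι → K, (∀ a, FreeCommRing.lift v (p a) = 0) → ∀ b, FreeCommRing.lift v (q b) = 0)
    (v : ι → L) (hv : ∀ a, FreeCommRing.lift v (p a) = 0) (b : β) :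
    FreeCommRing.lift v (q b) = 0 := by
  let vanish (r : FreeCommRing ι) : Language.ring.Formula (Empty ⊕ ι) :=
    ((Ring.termOfFreeCommRing r).relabel Sum.inr).equal 0
  let φ : Language.ring.Sentence := Formula.iAlls ι
    ((Formula.iInf fun a => vanish (p a)).imp (Formula.iInf fun b => vanish (q b)))
  have key := h.realize_sentence φ
  simp only [φ, vanish, Sentence.Realize, Formula.realize_iAlls, Formula.realize_imp,
    Formula.realize_iInf, Formula.realize_equal, Term.realize_relabel, Ring.realize_zero,
    Ring.realize_termOfFreeCommRing, Function.comp_def, Sum.elim_inr] at key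
  exact key.1 hK v hv b

variable {G : Type*} [Group G] {d : ℕ}

/-- Index set of the variables of the generic pair of `d × d` matrices supported in `S`: a Boolean
selecting the matrix, the position of the entry, and the group element. -/
abbrev Var (d : ℕ) (S : Finset G) : Type _ := Bool × Fin d × Fin d × S

/-- The generic `d × d` matrix with entries supported in `S`; the two values of `c` give matrices
in disjoint sets of variables. -/
noncomputable def generic (S : Finset G) (c : Bool) :
    Matrix (Fin d) (Fin d) (MonoidAlgebra (FreeCommRing (Var d S)) G) :=
  Matrix.of fun i j => ∑ s : S, MonoidAlgebra.single (s : G) (FreeCommRing.of (c, i, j, s))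

/-- Specialisation of the variables: the map on matrices over group rings which substitutes
`v` into all coefficients. -/
noncomputable def specialize {K ι : Type*} [CommRing K] (v : ι → K) :
    Matrix (Fin d) (Fin d) (MonoidAlgebra (FreeCommRing ι) G) →+*
      Matrix (Fin d) (Fin d) (MonoidAlgebra K G) :=
  (MonoidAlgebra.mapRingHom G (FreeCommRing.lift v)).mapMatrix

theorem specialize_generic {K : Type*} [CommRing K] (S : Finset G)
    (X : Bool → Matrix (Fin d) (Fin d) (MonoidAlgebra K G))
    (hX : ∀ c i j, (X c i j).coeff.support ⊆ S) (c : Bool) :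
    specialize (fun x : Var d S => (X x.1 x.2.1 x.2.2.1).coeff x.2.2.2) (generic S c) = X c := by
  ext i j : 2
  simp only [specialize, generic, RingHom.mapMatrix_apply, Matrix.map_apply, Matrix.of_apply,
    map_sum, MonoidAlgebra.mapRingHom_single, FreeCommRing.lift_of]
  rw [Finset.sum_coe_sort S (fun s => MonoidAlgebra.single s ((X c i j).coeff s))]
  rw [MonoidAlgebra.coeff_sum]
  conv_rhs => rw [← Finsupp.sum_single (X c i j).coeff]
  rw [Finsupp.sum_of_support_subset _ (hX c i j) _ (by simp)]
  rfl

/-- Index set of the coefficients of the entries of `M` that are not identically zero. -/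
abbrev CoeffIndex {R : Type*} [Semiring R] (M : Matrix (Fin d) (Fin d) (MonoidAlgebra R G)) :
    Type _ :=
  Σ x : Fin d × Fin d, (M x.1 x.2).coeff.support

theorem specialize_eq_zero_iff {K ι : Type*} [CommRing K] (v : ι → K)
    (M : Matrix (Fin d) (Fin d) (MonoidAlgebra (FreeCommRing ι) G)) :
    specialize v M = 0 ↔
      ∀ x : CoeffIndex M, FreeCommRing.lift v ((M x.1.1 x.1.2).coeff x.2) = 0 := by
  constructor
  · rintro h ⟨⟨i, j⟩, g⟩
    have := congrArg (fun N => (N i j).coeff (g : G)) h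
    simpa [specialize] using this
  · intro h
    ext i j g
    by_cases hg : g ∈ (M i j).coeff.support
    · simpa [specialize] using h ⟨⟨i, j⟩, ⟨g, hg⟩⟩
    · simp [specialize, Finsupp.notMem_support_iff.1 hg]

theorem isStablyFinite_transfer (K L : Type*) [CommRing K] [CommRing L]
    [Ring.CompatibleRing K] [Ring.CompatibleRing L] (h : K ≅[Language.ring] L)
    (hK : IsStablyFinite (MonoidAlgebra K G)) : IsStablyFinite (MonoidAlgebra L G) := by
  classical
  intro d hd A B hAB
  let X : Bool → Matrix (Fin d) (Fin d) (MonoidAlgebra L G) := fun c => cond c A B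
  let S : Finset G := Finset.univ.biUnion fun x : Bool × Fin d × Fin d =>
    (X x.1 x.2.1 x.2.2).coeff.support
  have hX : ∀ c i j, (X c i j).coeff.support ⊆ S := fun c i j =>
    Finset.subset_biUnion_of_mem
      (fun x : Bool × Fin d × Fin d => (X x.1 x.2.1 x.2.2).coeff.support)
      (Finset.mem_univ (c, i, j))
  let v : Var d S → L := fun x => (X x.1 x.2.1 x.2.2.1).coeff x.2.2.2
  have hA : specialize v (generic S true) = A := specialize_generic S X hX true
  have hB : specialize v (generic S false) = B := specialize_generic S X hX false
  let M : Matrix (Fin d) (Fin d) (MonoidAlgebra (FreeCommRing (Var d S)) G) :=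
    generic S true * generic S false - 1
  let N : Matrix (Fin d) (Fin d) (MonoidAlgebra (FreeCommRing (Var d S)) G) :=
    generic S false * generic S true - 1
  have hN : specialize v N = 0 := by
    rw [specialize_eq_zero_iff]
    refine polynomial_implication_transfer K L h
      (fun x : CoeffIndex M => (M x.1.1 x.1.2).coeff x.2) _ ?_ v ?_
    · intro w
      rw [← specialize_eq_zero_iff, ← specialize_eq_zero_iff]
      simp only [M, N, map_sub, map_mul, map_one, sub_eq_zero]
      exact hK d hd _ _
    · rw [← specialize_eq_zero_iff]
      simp only [M, map_sub, map_mul, map_one, sub_eq_zero, hA, hB, hAB]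
  simpa only [N, map_sub, map_mul, map_one, sub_eq_zero, hA, hB] using hN

end StablyFiniteTransfer

theorem stably_finite_of_elementarilyEquivalent
    {G : Type*} [Group G] (K L : Type*) [Field K] [Field L]
    (h : letI := Ring.compatibleRingOfRing K; letI := Ring.compatibleRingOfRing L;
      K ≅[Language.ring] L) :
    IsStablyFinite (MonoidAlgebra K G) ↔ IsStablyFinite (MonoidAlgebra L G) := by
  let _ := Ring.compatibleRingOfRing K
  let _ := Ring.compatibleRingOfRing L
  exact ⟨StablyFiniteTransfer.isStablyFinite_transfer K L h,
    StablyFiniteTransfer.isStablyFinite_transfer L K h.symm⟩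
end

section
/- Let $G$ be a group, let $p$ be a prime, and let $K$ be the algebraic closure of the field $\mathbb{Z}/p\mathbb{Z}$. If the group ring $F[G]$ is stably finite for every finite field $F$, then the group ring $K[G]$ is stably finite. -/
/-- An element of `K[G]` whose coefficients all lie in the range of `f : F →+* K` comes from
`F[G]`. -/
theorem exists_mapRingHom_eq {F K G : Type*} [Semiring F] [Semiring K] [Monoid G] (f : F →+* K)
    (x : MonoidAlgebra K G) (hx : ∀ g, ∃ a, f a = x.coeff g) :
    ∃ y, MonoidAlgebra.mapRingHom G f y = x := by
  choose c hc using hx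
  refine ⟨∑ g ∈ x.coeff.support, MonoidAlgebra.single g (c g), ?_⟩
  rw [map_sum]
  simp only [MonoidAlgebra.mapRingHom_single, hc]
  apply MonoidAlgebra.coeff_injective
  rw [MonoidAlgebra.coeff_sum]
  exact x.coeff.sum_single

theorem stably_finite_algebraicClosure_zmod_of_finite_fields_stably_finite
    {G : Type*} [Group G] (p : ℕ) [Fact p.Prime]
    (h : ∀ (F : Type) [Field F] [Finite F], IsStablyFinite (MonoidAlgebra F G)) :
    IsStablyFinite (MonoidAlgebra (AlgebraicClosure (ZMod p)) G) := by
  intro d hd A B hAB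
  let S : Set (AlgebraicClosure (ZMod p)) :=
    ⋃ i, ⋃ j, (Set.range (A i j).coeff ∪ Set.range (B i j).coeff)
  have hS : Finite S := Set.finite_iUnion fun i => Set.finite_iUnion fun j =>
    (Finsupp.finite_range _).union (Finsupp.finite_range _)
  let F := IntermediateField.adjoin (ZMod p) S
  have : FiniteDimensional (ZMod p) F := IntermediateField.finiteDimensional_adjoin
    fun x _ => Algebra.IsIntegral.isIntegral x
  have : Finite F := Module.finite_of_finite (ZMod p)
  let φ := MonoidAlgebra.mapRingHom G (algebraMap F (AlgebraicClosure (ZMod p)))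
  have hφ : Function.Injective φ :=
    MonoidAlgebra.map_injective _ (algebraMap F (AlgebraicClosure (ZMod p))).injective
  have hA : ∀ i j, ∃ y, φ y = A i j := fun i j => exists_mapRingHom_eq _ _ fun g =>
    ⟨⟨_, IntermediateField.subset_adjoin _ _
      (Set.mem_iUnion₂.2 ⟨i, j, Or.inl ⟨g, rfl⟩⟩)⟩, rfl⟩
  have hB : ∀ i j, ∃ y, φ y = B i j := fun i j => exists_mapRingHom_eq _ _ fun g =>
    ⟨⟨_, IntermediateField.subset_adjoin _ _
      (Set.mem_iUnion₂.2 ⟨i, j, Or.inr ⟨g, rfl⟩⟩)⟩, rfl⟩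
  choose A' hA' using hA
  choose B' hB' using hB
  have eA : φ.mapMatrix (Matrix.of A') = A := Matrix.ext hA'
  have eB : φ.mapMatrix (Matrix.of B') = B := Matrix.ext hB'
  have hAB' : Matrix.of A' * Matrix.of B' = 1 :=
    Matrix.map_injective hφ (show φ.mapMatrix _ = φ.mapMatrix _ by
      rw [map_mul, eA, eB, hAB, map_one])
  rw [← eA, ← eB, ← map_mul, h F d hd _ _ hAB', map_one]
end
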